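/- Let (σ,α) be a collection of hypermaps of genus zero. Then exchanging the two variables in its Whitney polynomial yields the Whitney polynomial of its dual (α⁻¹σ, α⁻¹): R(σ,α;u,v) = R(α⁻¹σ, α⁻¹; v,u). -/

import Mathlib

/-!
The bijection of refinements is `β ↦ α⁻¹β`. Write `n` for the number of points.  Summing the local
genus conditions over the cycles of `α` gives `n + z(α) = z(β) + z(β⁻¹α)` for every refinement
`β`.  If moreover `(σ, β)` and `(α⁻¹σ, α⁻¹β)` have genus zero, then the two genus formulas, whose
third permutation is `β⁻¹σ` in both cases, combine to
`κ(σ, β) + κ(α⁻¹σ, α⁻¹β) = κ(σ, α) + z(β⁻¹σ)`, and this says exactly that the exponents of `u` and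
`v` are exchanged.

So the point is that genus zero is inherited by refinements.  This follows from the inequality
`2κ(σ, β) - z(β⁻¹σ) ≤ 2κ(σ, βγ) - z((βγ)⁻¹σ) + (n - z(γ))` (`genus_ineq`), which for `β = 1` also
gives nonnegativity of the genus.  It is proved by removing one transposition `τ = (a b)` from `γ`
at a time: `κ` can grow by at most one, and if it does then `a` and `b` lie in different
components, hence in different cycles of the third permutation, which therefore changes its number
of cycles in the favourable direction.  All orbit counts are treated as numbers of classes of
equivalence relations, compared through `card_le_join` and `card_lt_of_le`.
-/

open scoped Classical

namespace Hypermap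

variable {γ : Type*} [Fintype γ] [DecidableEq γ]

/-- The number of cycles of a permutation, counting fixed points as cycles. -/
noncomputable def zc (π : Equiv.Perm γ) : ℕ :=
  Nat.card (MulAction.orbitRel.Quotient (Subgroup.zpowers π) γ)

/-- The number of connected components of the collection of hypermaps `(σ, α)`. -/
noncomputable def kappa (σ α : Equiv.Perm γ) : ℕ :=
  Nat.card (MulAction.orbitRel.Quotient
    (Subgroup.closure ({σ, α} : Set (Equiv.Perm γ))) γ)

/-- The support of the cycle of `π` containing `x`. -/
def cycleSet (π : Equiv.Perm γ) (x : γ) : Set γ := {y | π.SameCycle x y}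

/-- The number of cycles of `π` meeting the set `S` (for invariant `S`,
the number of cycles of the restriction of `π` to `S`). -/
noncomputable def zcOn (π : Equiv.Perm γ) (S : Set γ) : ℕ :=
  (S.image fun x =>
    Quotient.mk (MulAction.orbitRel (Subgroup.zpowers π) γ) x).ncard

/-- `β` is a refinement of `α`: the support of every cycle of `α` is
`β`-invariant, and on the support `S` of each cycle of `α` the restriction
`βᵢ` of `β` satisfies the genus-zero condition `|S| + 1 = z(βᵢ) + z(βᵢ⁻¹αᵢ)`. -/
def IsRefinement (β α : Equiv.Perm γ) : Prop :=
  (∀ x, α.SameCycle x (β x)) ∧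
  ∀ x, Nat.card (cycleSet α x) + 1 =
    zcOn β (cycleSet α x) + zcOn (β⁻¹ * α) (cycleSet α x)

/-- The Whitney polynomial of a collection of hypermaps. -/
noncomputable def whitney {A : Type*} [CommRing A] (σ α : Equiv.Perm γ) (u v : A) : A :=
  ∑ β ∈ Finset.univ.filter (fun β => IsRefinement β α),
    u ^ (kappa σ β - kappa σ α) *
      v ^ (kappa σ β + Fintype.card γ - zc β - zc σ)

end Hypermap

set_option linter.unusedSectionVars false

namespace Hypermap

/-! ### Counting classes of equivalence relations -/

section Setoids

variable {X : Type*} [Finite X]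

lemma card_quot_mono {r s : Setoid X} (h : r ≤ s) :
    Nat.card (Quotient s) ≤ Nat.card (Quotient r) :=
  Nat.card_le_card_of_surjective (Quotient.map' (s₁ := r) (s₂ := s) id fun _ _ hab => h hab) (by
    intro q
    induction q using Quotient.inductionOn with
    | h x => exact ⟨Quotient.mk r x, rfl⟩)

lemma card_lt_of_le {r s : Setoid X} (h : r ≤ s) {a b : X} (hr : ¬ r a b) (hs : s a b) :
    Nat.card (Quotient s) + 1 ≤ Nat.card (Quotient r) := by
  have := Fintype.ofFinite (Quotient r)
  have := Fintype.ofFinite (Quotient s)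
  rw [Nat.card_eq_fintype_card, Nat.card_eq_fintype_card]
  refine Fintype.card_lt_of_surjective_not_injective
    (Quotient.map' (s₁ := r) (s₂ := s) id fun _ _ hab => h hab) ?_ ?_
  · intro q
    induction q using Quotient.inductionOn with
    | h x => exact ⟨Quotient.mk r x, rfl⟩
  · intro hi
    exact hr (Quotient.exact (hi (a₁ := Quotient.mk r a) (a₂ := Quotient.mk r b)
      (Quotient.sound hs)))

/-- The equivalence relation obtained from `r` by merging the classes of `a` and `b`. -/
def join (r : Setoid X) (a b : X) : Setoid X where
  r x y := r x y ∨ (r x a ∧ r y b) ∨ (r x b ∧ r y a)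
  iseqv := by
    have t : ∀ {x y z}, r x y → r y z → r x z := fun h h' => r.trans' h h'
    have s : ∀ {x y}, r x y → r y x := fun h => r.symm' h
    refine ⟨fun x => Or.inl (r.refl' x), ?_, ?_⟩
    · rintro x y (h | ⟨h, h'⟩ | ⟨h, h'⟩)
      · exact Or.inl (s h)
      · exact Or.inr (Or.inr ⟨h', h⟩)
      · exact Or.inr (Or.inl ⟨h', h⟩)
    · rintro x y z (h | ⟨h, h'⟩ | ⟨h, h'⟩) (k | ⟨k, k'⟩ | ⟨k, k'⟩)
      · exact Or.inl (t h k)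
      · exact Or.inr (Or.inl ⟨t h k, k'⟩)
      · exact Or.inr (Or.inr ⟨t h k, k'⟩)
      · exact Or.inr (Or.inl ⟨h, t (s k) h'⟩)
      · exact Or.inl (t h (t (s k) (t h' (s k'))))
      · exact Or.inl (t h (s k'))
      · exact Or.inr (Or.inr ⟨h, t (s k) h'⟩)
      · exact Or.inl (t h (s k'))
      · exact Or.inl (t h (t (s k) (t h' (s k'))))

lemma card_le_join (r s : Setoid X) (a b : X) (h : s ≤ join r a b) :
    Nat.card (Quotient r) ≤ Nat.card (Quotient s) + 1 := by
  refine le_trans ?_ (Nat.add_le_add_right (card_quot_mono h) 1)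
  rw [← Finite.card_option]
  -- Send the class of `b` to `none` and every other class to its merged class.
  let f : Quotient r → Option (Quotient (join r a b)) := fun q =>
    if q = Quotient.mk r b then none
    else some (Quotient.map' (s₁ := r) (s₂ := join r a b) id (fun _ _ hab => Or.inl hab) q)
  refine Nat.card_le_card_of_injective f ?_
  intro p q hpq
  by_cases hp : p = Quotient.mk r b <;> by_cases hq : q = Quotient.mk r b
  · rw [hp, hq]
  · simp [f, hp, hq] at hpq
  · simp [f, hp, hq] at hpq
  · simp only [f, hp, hq, if_false, Option.some.injEq] at hpq
    induction p using Quotient.inductionOn with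
    | h x =>
      induction q using Quotient.inductionOn with
      | h y =>
        have : join r a b x y := Quotient.exact hpq
        rcases this with h | ⟨-, h⟩ | ⟨h, -⟩
        · exact Quotient.sound h
        · exact absurd (Quotient.sound h) hq
        · exact absurd (Quotient.sound h) hp

end Setoids

variable {γ : Type*} [Fintype γ] [DecidableEq γ]

/-! ### Cycles and components as equivalence relations -/

/-- The partition of the points into the cycles of `π`. -/
def zrel (π : Equiv.Perm γ) : Setoid γ := MulAction.orbitRel (Subgroup.zpowers π) γ

/-- The partition of the points into the connected components of `(σ, α)`. -/
def krel (σ α : Equiv.Perm γ) : Setoid γ :=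
  MulAction.orbitRel (Subgroup.closure ({σ, α} : Set (Equiv.Perm γ))) γ

lemma zc_eq (π : Equiv.Perm γ) : zc π = Nat.card (Quotient (zrel π)) := rfl

lemma kappa_eq (σ α : Equiv.Perm γ) : kappa σ α = Nat.card (Quotient (krel σ α)) := rfl

lemma orbitRel_closure_le {S : Set (Equiv.Perm γ)} {s : Setoid γ}
    (h : ∀ g ∈ S, ∀ x, s x (g x)) : MulAction.orbitRel (Subgroup.closure S) γ ≤ s := by
  have key : ∀ g ∈ Subgroup.closure S, ∀ x, s x (g x) := by
    intro g hg
    induction hg using Subgroup.closure_induction with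
    | mem g hg => exact h g hg
    | one => exact fun x => s.refl' x
    | mul g k _ _ hg hk => exact fun x => s.trans' (hk x) (hg (k x))
    | inv g _ hg => exact fun x => s.symm' (by simpa using hg (g⁻¹ x))
  rintro x y ⟨⟨g, hg⟩, rfl⟩
  exact s.symm' (key g hg y)

lemma krel_left (σ α : Equiv.Perm γ) (x : γ) : krel σ α x (σ x) :=
  (krel σ α).symm' ⟨⟨σ, Subgroup.subset_closure (by simp)⟩, rfl⟩

lemma krel_right (σ α : Equiv.Perm γ) (x : γ) : krel σ α x (α x) :=
  (krel σ α).symm' ⟨⟨α, Subgroup.subset_closure (by simp)⟩, rfl⟩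

lemma zrel_self (π : Equiv.Perm γ) (x : γ) : zrel π x (π x) :=
  (zrel π).symm' ⟨⟨π, Subgroup.mem_zpowers π⟩, rfl⟩

lemma krel_le {σ α : Equiv.Perm γ} {s : Setoid γ} (h₁ : ∀ x, s x (σ x)) (h₂ : ∀ x, s x (α x)) :
    krel σ α ≤ s := by
  refine orbitRel_closure_le ?_
  rintro g (rfl | rfl)
  · exact h₁
  · exact h₂

lemma zrel_le {π : Equiv.Perm γ} {s : Setoid γ} (h : ∀ x, s x (π x)) : zrel π ≤ s := by
  unfold zrel
  rw [Subgroup.zpowers_eq_closure]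
  refine orbitRel_closure_le ?_
  rintro g rfl
  exact h

lemma zrel_iff (π : Equiv.Perm γ) (x y : γ) : zrel π x y ↔ π.SameCycle x y := by
  constructor
  · intro h
    exact zrel_le (s := Equiv.Perm.SameCycle.setoid π)
      (fun x => (Equiv.Perm.sameCycle_apply_right.2 (Equiv.Perm.SameCycle.refl π x))) h
  · rintro ⟨i, rfl⟩
    exact (zrel π).symm' ⟨⟨π ^ i, Subgroup.zpow_mem_zpowers π i⟩, rfl⟩

lemma zc_one : zc (1 : Equiv.Perm γ) = Fintype.card γ := by
  rw [zc_eq, ← Nat.card_eq_fintype_card]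
  refine (Nat.card_congr (Equiv.ofBijective (Quotient.mk (zrel 1)) ⟨?_, ?_⟩)).symm
  · intro x y h
    have := (zrel_iff 1 x y).1 (Quotient.exact h)
    simpa using this
  · exact Quotient.mk_surjective

lemma zc_le (π : Equiv.Perm γ) : zc π ≤ Fintype.card γ := by
  rw [zc_eq, ← Nat.card_eq_fintype_card]
  exact Nat.card_le_card_of_surjective _ (Quotient.mk_surjective (s := zrel π))

lemma zc_inv (π : Equiv.Perm γ) : zc π⁻¹ = zc π := by
  unfold zc; rw [Subgroup.zpowers_inv]

lemma zcOn_inv (π : Equiv.Perm γ) (S : Set γ) : zcOn π⁻¹ S = zcOn π S := by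
  unfold zcOn; rw [Subgroup.zpowers_inv]

lemma kappa_one (σ : Equiv.Perm γ) : kappa σ 1 = zc σ := by
  have : krel σ 1 = zrel σ := le_antisymm
    (krel_le (zrel_self σ) fun x => (zrel σ).refl' x) (zrel_le (krel_left σ 1))
  rw [kappa_eq, zc_eq, this]

/-! ### Multiplication by a transposition and the genus inequality -/

lemma zc_le_swap_mul (ρ : Equiv.Perm γ) (a b : γ) : zc ρ ≤ zc (Equiv.swap a b * ρ) + 1 := by
  refine card_le_join (zrel ρ) _ a b (zrel_le fun x => ?_)
  have hx := zrel_self ρ x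
  rw [Equiv.Perm.mul_apply]
  by_cases h1 : ρ x = a
  · rw [h1, Equiv.swap_apply_left]
    exact Or.inr (Or.inl ⟨h1 ▸ hx, (zrel ρ).refl' b⟩)
  by_cases h2 : ρ x = b
  · rw [h2, Equiv.swap_apply_right]
    exact Or.inr (Or.inr ⟨h2 ▸ hx, (zrel ρ).refl' a⟩)
  rw [Equiv.swap_apply_of_ne_of_ne h1 h2]
  exact Or.inl hx

/-- A transposition of points in different cycles puts them in the same cycle: follow the
`μ`-cycle of `a` until it would return to `a`. -/
lemma zrel_swap_mul (μ : Equiv.Perm γ) (a b : γ) (h : ¬ zrel μ a b) :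
    zrel (Equiv.swap a b * μ) a b := by
  set t := zrel (Equiv.swap a b * μ) with ht
  have key : ∀ j : ℕ, t a ((μ ^ j) a) := by
    intro j
    induction j with
    | zero => exact t.refl' a
    | succ j ih =>
      by_cases h1 : (μ ^ (j + 1)) a = a
      · rw [h1]
      have h2 : (μ ^ (j + 1)) a ≠ b := fun h2 => h ((zrel_iff _ _ _).2 ⟨(j + 1 : ℕ), by
        rw [zpow_natCast, h2]⟩)
      have h3 := zrel_self (Equiv.swap a b * μ) ((μ ^ j) a)
      rw [Equiv.Perm.mul_apply, ← Equiv.Perm.mul_apply μ, ← pow_succ',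
        Equiv.swap_apply_of_ne_of_ne h1 h2] at h3
      exact t.trans' ih h3
  have h1 := key (orderOf μ - 1)
  have h2 := zrel_self (Equiv.swap a b * μ) ((μ ^ (orderOf μ - 1)) a)
  rw [Equiv.Perm.mul_apply, ← Equiv.Perm.mul_apply μ, ← pow_succ',
    Nat.sub_add_cancel (orderOf_pos μ), pow_orderOf_eq_one, Equiv.Perm.one_apply,
    Equiv.swap_apply_left] at h2
  exact t.trans' h1 h2

lemma zc_swap_mul_lt (μ : Equiv.Perm γ) (a b : γ) (h : ¬ zrel μ a b) :
    zc (Equiv.swap a b * μ) + 1 ≤ zc μ := by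
  have hab := zrel_swap_mul μ a b h
  refine card_lt_of_le (zrel_le fun x => ?_) h hab
  set t := zrel (Equiv.swap a b * μ) with ht
  have hx : t x ((Equiv.swap a b * μ) x) := zrel_self _ x
  rw [Equiv.Perm.mul_apply] at hx
  by_cases h1 : μ x = a
  · rw [h1, Equiv.swap_apply_left] at hx
    rw [h1]
    exact t.trans' hx (t.symm' hab)
  by_cases h2 : μ x = b
  · rw [h2, Equiv.swap_apply_right] at hx
    rw [h2]
    exact t.trans' hx hab
  rwa [Equiv.swap_apply_of_ne_of_ne h1 h2] at hx

lemma exists_swap (δ : Equiv.Perm γ) (h : δ ≠ 1) :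
    ∃ a b, zc δ + 1 ≤ zc (Equiv.swap a b * δ) := by
  obtain ⟨a, ha⟩ : ∃ a, δ a ≠ a := by
    by_contra! hc
    exact h (Equiv.ext hc)
  -- After this multiplication `a` is a fixed point.
  refine ⟨a, δ a, ?_⟩
  have h1 : ¬ zrel (Equiv.swap a (δ a) * δ) a (δ a) := by
    rw [zrel_iff]
    intro hs
    have hf : Function.IsFixedPt (Equiv.swap a (δ a) * δ) a := by
      simp [Function.IsFixedPt]
    exact ha (hs.eq_of_left hf).symm
  simpa [← mul_assoc] using zc_swap_mul_lt _ _ _ h1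

lemma krel_join (σ π : Equiv.Perm γ) (a b : γ) :
    krel σ π ≤ join (krel σ (π * Equiv.swap a b)) a b := by
  set k := krel σ (π * Equiv.swap a b) with hk
  refine krel_le (fun x => Or.inl (krel_left _ _ x)) fun x => ?_
  have hx : ∀ x, k x (π (Equiv.swap a b x)) := krel_right σ (π * Equiv.swap a b)
  by_cases h1 : x = a
  · subst h1
    have := hx b
    rw [Equiv.swap_apply_right] at this
    exact Or.inr (Or.inl ⟨k.refl' _, k.symm' this⟩)
  by_cases h2 : x = b
  · subst h2
    have := hx a
    rw [Equiv.swap_apply_left] at this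
    exact Or.inr (Or.inr ⟨k.refl' _, k.symm' this⟩)
  have := hx x
  rw [Equiv.swap_apply_of_ne_of_ne h1 h2] at this
  exact Or.inl this

/-- The effect of a single transposition on the quantity `2κ(σ, π) - z(π⁻¹σ)`. -/
lemma genus_step (σ π : Equiv.Perm γ) (a b : γ) :
    2 * kappa σ (π * Equiv.swap a b) + zc (π⁻¹ * σ) ≤
      2 * kappa σ π + zc (Equiv.swap a b * (π⁻¹ * σ)) + 1 := by
  have hz := zc_le_swap_mul (π⁻¹ * σ) a b
  have hj := krel_join σ π a b
  by_cases h : krel σ (π * Equiv.swap a b) a b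
  · have : kappa σ (π * Equiv.swap a b) ≤ kappa σ π := by
      refine card_quot_mono (hj.trans ?_)
      set k := krel σ (π * Equiv.swap a b)
      rintro x y (h1 | ⟨h1, h2⟩ | ⟨h1, h2⟩)
      · exact h1
      · exact k.trans' h1 (k.trans' h (k.symm' h2))
      · exact k.trans' h1 (k.trans' (k.symm' h) (k.symm' h2))
    omega
  · have h1 : kappa σ (π * Equiv.swap a b) ≤ kappa σ π + 1 := card_le_join _ _ a b hj
    have h2 : ¬ zrel (Equiv.swap a b * (π⁻¹ * σ)) a b := by
      intro hzr
      refine h (zrel_le (s := krel σ (π * Equiv.swap a b)) (fun x => ?_) hzr)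
      set k := krel σ (π * Equiv.swap a b) with hk
      have e : (π * Equiv.swap a b) ((Equiv.swap a b * (π⁻¹ * σ)) x) = σ x := by simp
      have h3 : k _ _ := krel_right σ (π * Equiv.swap a b) ((Equiv.swap a b * (π⁻¹ * σ)) x)
      rw [e] at h3
      exact k.trans' (krel_left _ _ x) (k.symm' h3)
    have h3 := zc_swap_mul_lt _ _ _ h2
    rw [← mul_assoc, Equiv.swap_mul_self, one_mul] at h3
    omega

/-- With `π = βγ` and `δ = γ⁻¹`, this bounds the growth of `2κ(σ, ·) - z((·)⁻¹σ)` in passing from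
`βγ` to `β` by the minimal number `n - z(γ)` of transpositions with product `γ`. -/
lemma genus_ineq (σ : Equiv.Perm γ) : ∀ (m : ℕ) (δ π : Equiv.Perm γ),
    Fintype.card γ - zc δ = m →
    2 * kappa σ (π * δ) + zc (π⁻¹ * σ) + zc δ ≤
      2 * kappa σ π + zc ((π * δ)⁻¹ * σ) + Fintype.card γ := by
  intro m
  induction m using Nat.strong_induction_on with
  | _ m ih =>
    intro δ π hm
    by_cases hδ : δ = 1
    · subst hδ
      simp [zc_one]
    · obtain ⟨a, b, hab⟩ := exists_swap δ hδ
      have hle := zc_le (Equiv.swap a b * δ)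
      have h1 := ih (Fintype.card γ - zc (Equiv.swap a b * δ)) (by omega)
        (Equiv.swap a b * δ) (π * Equiv.swap a b) rfl
      have h2 := genus_step σ π a b
      have e1 : π * Equiv.swap a b * (Equiv.swap a b * δ) = π * δ := by
        rw [mul_assoc, ← mul_assoc (Equiv.swap a b), Equiv.swap_mul_self, one_mul]
      have e2 : (π * Equiv.swap a b)⁻¹ * σ = Equiv.swap a b * (π⁻¹ * σ) := by
        rw [mul_inv_rev, Equiv.swap_inv, mul_assoc]
      rw [e1, e2] at h1
      omega

/-- Nonnegativity of the genus. -/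
lemma genus_nonneg (σ α : Equiv.Perm γ) :
    zc σ + zc α + zc (α⁻¹ * σ) ≤ Fintype.card γ + 2 * kappa σ α := by
  have h := genus_ineq σ _ α⁻¹ α rfl
  simp only [mul_inv_cancel, kappa_one, inv_one, one_mul, zc_inv] at h
  omega

/-! ### Refinements and duality -/

lemma cycleSet_inv (α : Equiv.Perm γ) (x : γ) : cycleSet α⁻¹ x = cycleSet α x := by
  ext y
  simp [cycleSet]

lemma IsRefinement.dual {α β : Equiv.Perm γ} (h : IsRefinement β α) :
    IsRefinement (α⁻¹ * β) α⁻¹ := by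
  refine ⟨fun x => ?_, fun x => ?_⟩
  · rw [Equiv.Perm.sameCycle_inv, ← Equiv.Perm.sameCycle_apply_right]
    simpa using h.1 x
  · have e1 : (α⁻¹ * β)⁻¹ * α⁻¹ = β⁻¹ := by group
    have e2 : α⁻¹ * β = (β⁻¹ * α)⁻¹ := by group
    rw [cycleSet_inv, e1, e2, zcOn_inv, zcOn_inv, h.2 x, add_comm]

lemma IsRefinement.zrel_le {α β : Equiv.Perm γ} (h : IsRefinement β α) : zrel β ≤ zrel α :=
  Hypermap.zrel_le fun x => (zrel_iff _ _ _).2 (h.1 x)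

lemma IsRefinement.kappa_le {α β : Equiv.Perm γ} (h : IsRefinement β α) (σ : Equiv.Perm γ) :
    kappa σ α ≤ kappa σ β := by
  refine card_quot_mono (krel_le (krel_left σ α) fun x => ?_)
  have h1 : zrel α ≤ krel σ α := Hypermap.zrel_le (krel_right σ α)
  exact h1 (h.zrel_le (zrel_self β x))

lemma sum_zcOn {α π : Equiv.Perm γ} (h : zrel π ≤ zrel α) :
    ∑ q : Quotient (zrel α), zcOn π (cycleSet α q.out) = zc π := by
  let f : Quotient (zrel π) → Quotient (zrel α) :=
    Quotient.map' (s₁ := zrel π) (s₂ := zrel α) id fun _ _ hab => h hab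
  rw [zc_eq, ← Nat.card_congr (Equiv.sigmaFiberEquiv f), Nat.card_sigma]
  refine Finset.sum_congr rfl fun q _ => ?_
  change Nat.card _ = Nat.card {p | f p = q}
  congr 2
  ext p
  constructor
  · rintro ⟨y, hy, rfl⟩
    have : zrel α q.out y := (zrel_iff _ _ _).2 hy
    exact (Quotient.sound ((zrel α).symm' this)).trans (Quotient.out_eq q)
  · intro hp
    induction p using Quotient.inductionOn with
    | h y =>
      refine ⟨y, (zrel_iff _ _ _).1 (Quotient.exact ?_), rfl⟩
      exact (Quotient.out_eq q).trans (Eq.symm hp)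

lemma sum_card_cycleSet (α : Equiv.Perm γ) :
    ∑ q : Quotient (zrel α), Nat.card (cycleSet α q.out) = Fintype.card γ := by
  rw [← Nat.card_eq_fintype_card,
    ← Nat.card_congr (Equiv.sigmaFiberEquiv (Quotient.mk (zrel α))), Nat.card_sigma]
  refine Finset.sum_congr rfl fun q _ => ?_
  change _ = Nat.card {p | Quotient.mk (zrel α) p = q}
  congr 2
  ext y
  change α.SameCycle _ _ ↔ Quotient.mk (zrel α) y = q
  rw [← zrel_iff]
  constructor
  · exact fun h => (Quotient.sound ((zrel α).symm' h)).trans (Quotient.out_eq q)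
  · exact fun h => Quotient.exact ((Quotient.out_eq q).trans h.symm)

lemma IsRefinement.card_add {α β : Equiv.Perm γ} (h : IsRefinement β α) :
    Fintype.card γ + zc α = zc β + zc (β⁻¹ * α) := by
  have h1 : zrel (β⁻¹ * α) ≤ zrel α := Hypermap.zrel_le fun x => by
    have h2 := (zrel_self β ((β⁻¹ * α) x))
    have e : β ((β⁻¹ * α) x) = α x := by simp
    rw [e] at h2
    exact (zrel α).trans' (zrel_self α x) ((zrel α).symm' (h.zrel_le h2))
  have hs : ∑ q : Quotient (zrel α), (Nat.card (cycleSet α q.out) + 1) =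
      ∑ q : Quotient (zrel α),
        (zcOn β (cycleSet α q.out) + zcOn (β⁻¹ * α) (cycleSet α q.out)) :=
    Finset.sum_congr rfl fun q _ => h.2 q.out
  rw [Finset.sum_add_distrib, Finset.sum_add_distrib, sum_card_cycleSet, sum_zcOn h.zrel_le,
    sum_zcOn h1, Finset.sum_const, Finset.card_univ, ← Nat.card_eq_fintype_card (α := Quotient _),
    smul_eq_mul, mul_one, ← zc_eq] at hs
  exact hs

/-- Genus zero is inherited by refinements. -/
lemma IsRefinement.genus_zero {α β : Equiv.Perm γ} (h : IsRefinement β α) (σ : Equiv.Perm γ)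
    (hg : Fintype.card γ + 2 * kappa σ α = zc σ + zc α + zc (α⁻¹ * σ)) :
    Fintype.card γ + 2 * kappa σ β = zc σ + zc β + zc (β⁻¹ * σ) := by
  have h1 := genus_ineq σ _ (α⁻¹ * β) α rfl
  have h2 := genus_nonneg σ β
  have h3 := h.card_add
  have e : zc (α⁻¹ * β) = zc (β⁻¹ * α) := by rw [← zc_inv, mul_inv_rev, inv_inv]
  rw [mul_inv_cancel_left, e] at h1
  omega

lemma kappa_dual (σ α : Equiv.Perm γ) : kappa (α⁻¹ * σ) α⁻¹ = kappa σ α := by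
  have : krel (α⁻¹ * σ) α⁻¹ = krel σ α := by
    have hinv : ∀ (s : Setoid γ) (π : Equiv.Perm γ), (∀ x, s x (π x)) → ∀ x, s x (π⁻¹ x) :=
      fun s π h x => s.symm' (by simpa using h (π⁻¹ x))
    refine le_antisymm (krel_le (fun x => ?_) ?_) (krel_le (fun x => ?_) ?_)
    · exact (krel σ α).trans' (krel_left σ α x) (hinv _ _ (krel_right σ α) (σ x))
    · exact hinv _ _ (krel_right σ α)
    · set k := krel (α⁻¹ * σ) α⁻¹ with hk
      have h1 : k x (α⁻¹ (σ x)) := krel_left (α⁻¹ * σ) α⁻¹ x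
      have h2 : k (σ x) (α⁻¹ (σ x)) := krel_right (α⁻¹ * σ) α⁻¹ (σ x)
      exact k.trans' h1 (k.symm' h2)
    · have := hinv _ _ (krel_right (α⁻¹ * σ) α⁻¹)
      simpa using this
  rw [kappa_eq, kappa_eq, this]

end Hypermap

open Hypermap in
/-- for a genus-zero collection of hypermaps, exchanging the
variables of the Whitney polynomial gives the Whitney polynomial of the dual
`(α⁻¹σ, α⁻¹)`. -/
theorem whitney_planar_dual
    {γ : Type*} [Fintype γ] [DecidableEq γ] (σ α : Equiv.Perm γ)
    (hg : Fintype.card γ + 2 * kappa σ α = zc σ + zc α + zc (α⁻¹ * σ))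
    {A : Type*} [CommRing A] (u v : A) :
    whitney σ α u v = whitney (α⁻¹ * σ) α⁻¹ v u := by
  unfold whitney
  refine Finset.sum_nbij' (fun β => α⁻¹ * β) (fun β => α * β) ?_ ?_ ?_ ?_ ?_
  · intro β hβ
    simp only [Finset.mem_filter, Finset.mem_univ, true_and] at hβ ⊢
    exact hβ.dual
  · intro β hβ
    simp only [Finset.mem_filter, Finset.mem_univ, true_and] at hβ ⊢
    simpa using hβ.dual
  · intro β _
    exact mul_inv_cancel_left α β
  · intro β _
    exact inv_mul_cancel_left α β
  · intro β hβ
    simp only [Finset.mem_filter, Finset.mem_univ, true_and] at hβ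
    have hg' : Fintype.card γ + 2 * kappa (α⁻¹ * σ) α⁻¹ =
        zc (α⁻¹ * σ) + zc α⁻¹ + zc (α⁻¹⁻¹ * (α⁻¹ * σ)) := by
      rw [kappa_dual, zc_inv, inv_inv, mul_inv_cancel_left]
      omega
    have g1 := hβ.genus_zero σ hg
    have g2 := hβ.dual.genus_zero (α⁻¹ * σ) hg'
    have k1 := hβ.kappa_le σ
    have k2 := hβ.dual.kappa_le (α⁻¹ * σ)
    have c := hβ.card_add
    have e1 : (α⁻¹ * β)⁻¹ * (α⁻¹ * σ) = β⁻¹ * σ := by group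
    have e2 : zc (β⁻¹ * α) = zc (α⁻¹ * β) := by rw [← zc_inv, mul_inv_rev, inv_inv]
    rw [e1] at g2
    rw [e2] at c
    rw [kappa_dual] at k2 ⊢
    rw [mul_comm]
    congr 2 <;> omega
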